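/- Assume f satisfies (f_reg), (f_eq), (f_0) and (f_subc), and let R1 = 0. Then for every M > 0 there exists D > 0 such that for every d ≥ D, every solution u of the Cauchy problem with datum d on [0,R2], and every r ∈ [0, r1], one has u(r) + |u'(r)| ≥ M. -/

import Mathlib

open Real Set Filter Topology

noncomputable def phip (p s : ℝ) : ℝ := |s| ^ (p - 2) * s

def Freg (f : ℝ → ℝ) : Prop :=
  ContinuousOn f (Ici 0) ∧ ContDiffOn ℝ 1 f (Ioi 0)

def Feq (f : ℝ → ℝ) : Prop :=
  f 0 = 0 ∧ f 1 = 0 ∧ (∀ s : ℝ, 0 < s → s < 1 → f s < 0) ∧ (∀ s : ℝ, 1 < s → 0 < f s)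

def Fzero (p : ℝ) (f : ℝ → ℝ) : Prop :=
  ∃ c : ℝ, ∀ᶠ s in 𝓝[>] (0:ℝ), c ≤ f s / s ^ (p - 1)

noncomputable def pstar (p : ℝ) (N : ℕ) : EReal :=
  if p < (N:ℝ) then (((N:ℝ) * p / ((N:ℝ) - p) : ℝ) : EReal) else ⊤

noncomputable def fstar (f : ℝ → ℝ) (s : ℝ) : ℝ := sSup (f '' Icc 1 s)

noncomputable def Fint (f : ℝ → ℝ) (s : ℝ) : ℝ := ∫ σ in (1:ℝ)..s, f σ

def Fsubl (p : ℝ) (f : ℝ → ℝ) : Prop :=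
  ∃ M : ℝ, 0 < M ∧ ∀ ε > 0, ∀ᶠ s in atTop, f s / s ^ (p - 1) ≤ M + ε

def FsubcWith (p : ℝ) (N : ℕ) (f : ℝ → ℝ) (η : ℝ) : Prop :=
  (∀ c : ℝ, ∃ᶠ s in atTop, c < f s / s ^ (p - 1)) ∧
  0 < η ∧ η < 1 ∧
  ∃ L : ℝ, (L : EReal) < pstar p N ∧
    ∀ᶠ s in atTop, fstar f s * s / Fint f (η * s) ≤ L

def Fsubc (p : ℝ) (N : ℕ) (f : ℝ → ℝ) : Prop := ∃ η : ℝ, FsubcWith p N f η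

/-- A radial solution of the Neumann problem on `[R1,R2]`. -/
def NeumannSol (p : ℝ) (N : ℕ) (R1 R2 : ℝ) (f u : ℝ → ℝ) : Prop :=
  (∀ x ∈ Icc R1 R2, DifferentiableAt ℝ u x) ∧
  ContinuousOn (deriv u) (Icc R1 R2) ∧
  (∀ x ∈ Icc R1 R2, 0 < u x) ∧
  deriv u R1 = 0 ∧ deriv u R2 = 0 ∧
  ContinuousOn (fun x => x ^ (N - 1) * phip p (deriv u x)) (Icc R1 R2) ∧
  ∀ x ∈ Ioc R1 R2,
    HasDerivAt (fun t => t ^ (N - 1) * phip p (deriv u t)) (-(x ^ (N - 1)) * f (u x)) x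

noncomputable def fhat (f : ℝ → ℝ) (s : ℝ) : ℝ := if 0 ≤ s then f s else 0

noncomputable def Fhat (f : ℝ → ℝ) (s : ℝ) : ℝ := ∫ σ in (1:ℝ)..s, fhat f σ

/-- A solution of the Cauchy problem with datum `d`, for the nonlinearity `g`. -/
def CauchySol (p : ℝ) (N : ℕ) (R1 R2 : ℝ) (g u : ℝ → ℝ) (d : ℝ) : Prop :=
  (∀ x ∈ Icc R1 R2, DifferentiableAt ℝ u x) ∧
  ContinuousOn (deriv u) (Icc R1 R2) ∧
  u R1 = d ∧ deriv u R1 = 0 ∧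
  ContinuousOn (fun x => x ^ (N - 1) * phip p (deriv u x)) (Icc R1 R2) ∧
  ∀ x ∈ Ioc R1 R2,
    HasDerivAt (fun t => t ^ (N - 1) * phip p (deriv u t)) (-(x ^ (N - 1)) * g (u x)) x

noncomputable def rOne (R1 R2 : ℝ) (u : ℝ → ℝ) : ℝ :=
  sSup {x | x ∈ Icc R1 R2 ∧ ∀ s ∈ Ico R1 x, 0 < u s}

noncomputable def rZero (R2 η d : ℝ) (u : ℝ → ℝ) : ℝ :=
  sSup {x | x ∈ Icc 0 R2 ∧ ∀ s ∈ Ico 0 x, η * d < u s}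

noncomputable def energy (p : ℝ) (f u : ℝ → ℝ) (x : ℝ) : ℝ :=
  |deriv u x| ^ p / (p / (p - 1)) + Fhat f (u x)

def NonConstOn (R1 R2 : ℝ) (u : ℝ → ℝ) : Prop :=
  ∃ x ∈ Icc R1 R2, ∃ x' ∈ Icc R1 R2, u x ≠ u x'

def DistinctOn (R1 R2 : ℝ) (u v : ℝ → ℝ) : Prop :=
  ∃ x ∈ Icc R1 R2, u x ≠ v x

noncomputable def nOverPstar (p : ℝ) (N : ℕ) : ℝ :=
  if p < (N:ℝ) then ((N:ℝ) - p) / p else 0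

lemma mul_phip {p : ℝ} (hp : 1 < p) (s : ℝ) : s * phip p s = |s| ^ p := by
  rcases eq_or_ne s 0 with rfl | hs
  · simp [phip, Real.zero_rpow (by linarith : p ≠ 0)]
  · have h : 0 < |s| := abs_pos.mpr hs
    calc s * phip p s = |s| ^ (p - 2) * |s| ^ (2 : ℕ) := by rw [sq_abs, phip]; ring
      _ = |s| ^ p := by
        rw [← Real.rpow_natCast, ← Real.rpow_add h]; norm_num

lemma abs_phip {p : ℝ} (hp : 1 < p) (s : ℝ) : |phip p s| = |s| ^ (p - 1) := by
  rcases eq_or_ne s 0 with rfl | hs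
  · simp [phip, Real.zero_rpow (by linarith : p - 1 ≠ 0)]
  · have h : 0 < |s| := abs_pos.mpr hs
    rw [phip, abs_mul, abs_of_pos (Real.rpow_pos_of_pos h _), ← Real.rpow_add_one h.ne']
    ring_nf

lemma abs_phip_rpow_conj {p : ℝ} (hp : 1 < p) (s : ℝ) :
    |phip p s| ^ (p / (p - 1)) = |s| ^ p := by
  rw [abs_phip hp, ← Real.rpow_mul (abs_nonneg s), mul_div_cancel₀]
  linarith

lemma phip_conj_phip {p : ℝ} (hp : 1 < p) (s : ℝ) :
    |phip p s| ^ (p / (p - 1) - 2) * phip p s = s := by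
  rcases eq_or_ne s 0 with rfl | hs
  · simp [phip]
  · have h : 0 < |s| := abs_pos.mpr hs
    have hp1 : p - 1 ≠ 0 := by linarith
    rw [abs_phip hp, ← Real.rpow_mul (abs_nonneg s), phip, ← mul_assoc, ← Real.rpow_add h]
    have : (p - 1) * (p / (p - 1) - 2) + (p - 2) = 0 := by field_simp; ring
    rw [this, Real.rpow_zero, one_mul]

lemma phip_nonpos_iff {p s : ℝ} : phip p s ≤ 0 ↔ s ≤ 0 := by
  rcases eq_or_ne s 0 with rfl | hs
  · simp [phip]
  · have h := Real.rpow_pos_of_pos (abs_pos.mpr hs) (p - 2)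
    rw [phip]
    exact ⟨fun H => by by_contra! h'; nlinarith [mul_pos h h'],
      fun H => mul_nonpos_of_nonneg_of_nonpos h.le H⟩

lemma HasDerivAt.abs_rpow_of_weighted_phip {p : ℝ} (hp : 1 < p) {n : ℕ} {y : ℝ → ℝ} {x G : ℝ}
    (hx : 0 < x) (h : HasDerivAt (fun t => t ^ n * phip p (y t)) (-(x ^ n) * G) x) :
    HasDerivAt (fun t => |y t| ^ p)
      (p / (p - 1) * y x * (-G - n * phip p (y x) / x)) x := by
  have hw : HasDerivAt (fun t => phip p (y t)) (-G - n * phip p (y x) / x) x := by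
    have h1 := h.div (hasDerivAt_pow n x) (by positivity)
    refine (h1.congr_deriv ?_).congr_of_eventuallyEq ?_
    · rcases n with _ | n
      · simp
      · field_simp
        push_cast
        ring
    · filter_upwards [lt_mem_nhds hx] with t ht
      simp only [Pi.div_apply]
      field_simp
  have hq : 1 < p / (p - 1) := by rw [one_lt_div (by linarith)]; linarith
  have h2 := (hasDerivAt_abs_rpow (phip p (y x)) hq).comp x hw
  refine (h2.congr_deriv ?_).congr_of_eventuallyEq ?_
  · rw [mul_assoc (p / (p - 1)), phip_conj_phip hp]
  · exact Eventually.of_forall fun t => (abs_phip_rpow_conj hp (y t)).symm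

/-- The Pohozaev functional of a radial function `u` with derivative `y`, where `n + 1` is the
dimension. -/
noncomputable def pohozaev (p a : ℝ) (n : ℕ) (F u y : ℝ → ℝ) (t : ℝ) : ℝ :=
  t ^ (n + 1) * ((p - 1) / p * |y t| ^ p + F (u t)) + a * (t ^ n * phip p (y t) * u t)

lemma hasDerivAt_pohozaev {p : ℝ} (hp : 1 < p) {n : ℕ} {F u y : ℝ → ℝ} {x G : ℝ} (a : ℝ)
    (hx : 0 < x) (hu : HasDerivAt u (y x) x) (hF : HasDerivAt F G (u x))
    (h : HasDerivAt (fun t => t ^ n * phip p (y t)) (-(x ^ n) * G) x) :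
    HasDerivAt (pohozaev p a n F u y)
      (x ^ n * ((n + 1) * F (u x) - a * (u x * G) + (1 - (n + 1) / p + a) * |y x| ^ p)) x := by
  have h1 := h.abs_rpow_of_weighted_phip hp hx
  have h2 := ((hasDerivAt_pow (n + 1) x).mul ((h1.const_mul ((p - 1) / p)).add
    (hF.comp x hu))).add ((h.mul hu).const_mul a)
  refine h2.congr_deriv ?_
  have hp1 : p - 1 ≠ 0 := by linarith
  have hp0 : p ≠ 0 := by linarith
  have key : x ^ (n + 1) * ((p - 1) / p * (p / (p - 1) * y x * (-G - n * phip p (y x) / x)) +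
      G * y x) = - (x ^ n * n * |y x| ^ p) := by
    rw [← mul_phip hp]
    field_simp
    ring
  simp only [Pi.add_apply, Function.comp_apply, Nat.add_sub_cancel]
  rw [key]
  have h3 : x ^ n * phip p (y x) * y x = x ^ n * |y x| ^ p := by rw [← mul_phip hp]; ring
  rw [h3]
  push_cast
  field_simp
  ring

lemma continuousOn_pohozaev {p : ℝ} (hp : 1 < p) {n : ℕ} {F u y : ℝ → ℝ} {S : Set ℝ} (a : ℝ)
    (hF : Continuous F) (hu : ContinuousOn u S) (hy : ContinuousOn y S)
    (hv : ContinuousOn (fun t => t ^ n * phip p (y t)) S) :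
    ContinuousOn (pohozaev p a n F u y) S := by
  have h1 : ContinuousOn (fun t => |y t| ^ p) S :=
    hy.abs.rpow_const fun t _ => Or.inr (by linarith)
  exact ((continuousOn_id.pow (n + 1)).mul ((continuousOn_const.mul h1).add
    (hF.comp_continuousOn hu))).add (continuousOn_const.mul (hv.mul hu))

lemma pohozaev_zero {p : ℝ} {n : ℕ} {F u y : ℝ → ℝ} (a : ℝ) (hy : y 0 = 0) :
    pohozaev p a n F u y 0 = 0 := by
  simp [pohozaev, phip, hy]

lemma monotoneOn_Icc_of_hasDerivAt_nonneg {h h' : ℝ → ℝ} {b c : ℝ}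
    (hc : ContinuousOn h (Icc b c)) (hd : ∀ x ∈ Ioo b c, HasDerivAt h (h' x) x)
    (hn : ∀ x ∈ Ioo b c, 0 ≤ h' x) : MonotoneOn h (Icc b c) := by
  refine monotoneOn_of_hasDerivWithinAt_nonneg (convex_Icc b c) hc (f' := h') ?_ ?_
  · rw [interior_Icc]
    exact fun x hx => (hd x hx).hasDerivWithinAt
  · rwa [interior_Icc]

lemma le_mul_rpow_of_mul_deriv_le {F g : ℝ → ℝ} {L s₀ s : ℝ} (hs₀ : 0 < s₀)
    (hF : ∀ t, HasDerivAt F (g t) t) (hg : ∀ t, s₀ ≤ t → g t * t ≤ L * F t) (hs : s₀ ≤ s) :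
    F s ≤ F s₀ * s₀ ^ (-L) * s ^ L := by
  have hd : ∀ t, 0 < t → HasDerivAt (fun t => -(F t * t ^ (-L)))
      (-(g t * t ^ (-L) + F t * (-L * t ^ (-L - 1)))) t := fun t ht =>
    ((hF t).mul (Real.hasDerivAt_rpow_const (Or.inl ht.ne'))).neg
  have hm : MonotoneOn (fun t => -(F t * t ^ (-L))) (Icc s₀ s) := by
    refine monotoneOn_Icc_of_hasDerivAt_nonneg
      (fun t ht => (hd t (hs₀.trans_le ht.1)).continuousAt.continuousWithinAt)
      (fun t ht => hd t (hs₀.trans ht.1)) fun t ht => ?_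
    have ht0 : 0 < t := hs₀.trans ht.1
    have h1 : t ^ (-L) = t ^ (-L - 1) * t := by
      rw [← Real.rpow_add_one ht0.ne']; ring_nf
    rw [h1]
    have h2 := Real.rpow_pos_of_pos ht0 (-L - 1)
    nlinarith [mul_nonneg h2.le (sub_nonneg.mpr (hg t ht.1.le))]
  have h := hm (left_mem_Icc.mpr hs) (right_mem_Icc.mpr hs) hs
  have hs0 : 0 < s := hs₀.trans_le hs
  have h3 : s ^ (-L) * s ^ L = 1 := by rw [← Real.rpow_add hs0]; simp
  have h4 := Real.rpow_pos_of_pos hs0 L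
  simp only [neg_le_neg_iff] at h
  calc F s = F s * s ^ (-L) * s ^ L := by rw [mul_assoc, h3, mul_one]
    _ ≤ _ := by gcongr

/-- `u` has derivative `y` and solves the radial `p`-Laplace equation in dimension `n + 1` on
`[0, R]`, with `y 0 = 0`. -/
structure IsRadialSol (p : ℝ) (n : ℕ) (g u y : ℝ → ℝ) (R : ℝ) : Prop where
  hasDerivAt : ∀ x ∈ Icc 0 R, HasDerivAt u (y x) x
  deriv_zero : y 0 = 0
  continuousOn_deriv : ContinuousOn y (Icc 0 R)
  continuousOn_flux : ContinuousOn (fun x => x ^ n * phip p (y x)) (Icc 0 R)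
  hasDerivAt_flux : ∀ x ∈ Ioc 0 R,
    HasDerivAt (fun t => t ^ n * phip p (y t)) (-(x ^ n) * g (u x)) x

namespace IsRadialSol

variable {p : ℝ} {n : ℕ} {g u y : ℝ → ℝ} {R : ℝ}

lemma mono (h : IsRadialSol p n g u y R) {r : ℝ} (hr : r ≤ R) : IsRadialSol p n g u y r where
  hasDerivAt x hx := h.hasDerivAt x ⟨hx.1, hx.2.trans hr⟩
  deriv_zero := h.deriv_zero
  continuousOn_deriv := h.continuousOn_deriv.mono (Icc_subset_Icc_right hr)
  continuousOn_flux := h.continuousOn_flux.mono (Icc_subset_Icc_right hr)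
  hasDerivAt_flux x hx := h.hasDerivAt_flux x ⟨hx.1, hx.2.trans hr⟩

lemma continuousOn (h : IsRadialSol p n g u y R) : ContinuousOn u (Icc 0 R) :=
  fun x hx => (h.hasDerivAt x hx).continuousAt.continuousWithinAt

lemma flux_zero (h : IsRadialSol p n g u y R) : (0 : ℝ) ^ n * phip p (y 0) = 0 := by
  simp [h.deriv_zero, phip]

lemma deriv_nonpos (h : IsRadialSol p n g u y R) (hg : ∀ x ∈ Ioo 0 R, 0 ≤ g (u x)) :
    ∀ x ∈ Ioo 0 R, y x ≤ 0 := by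
  intro x hx
  have hm := monotoneOn_Icc_of_hasDerivAt_nonneg h.continuousOn_flux.neg
    (fun t ht => (h.hasDerivAt_flux t ⟨ht.1, ht.2.le⟩).neg) (fun t ht => by
      have := mul_nonneg (pow_nonneg ht.1.le n) (hg t ht)
      linarith)
  have h1 := hm ⟨le_rfl, hx.1.le.trans hx.2.le⟩ ⟨hx.1.le, hx.2.le⟩ hx.1.le
  simp only [Pi.neg_apply, h.flux_zero] at h1
  have h2 := pow_pos hx.1 n
  rw [← phip_nonpos_iff (p := p)]
  by_contra! h3
  nlinarith [mul_pos h2 h3]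

lemma le_initial (h : IsRadialSol p n g u y R) (hg : ∀ x ∈ Ioo 0 R, 0 ≤ g (u x)) :
    ∀ x ∈ Icc 0 R, u x ≤ u 0 := by
  intro x hx
  have hm := monotoneOn_Icc_of_hasDerivAt_nonneg h.continuousOn.neg
    (fun t ht => (h.hasDerivAt t ⟨ht.1.le, ht.2.le⟩).neg)
    (fun t ht => neg_nonneg.mpr (h.deriv_nonpos hg t ht))
  exact neg_le_neg_iff.mp (hm ⟨le_rfl, hx.1.trans hx.2⟩ hx hx.1)

lemma abs_deriv_rpow_le (hp : 1 < p) (h : IsRadialSol p n g u y R)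
    (hg : ∀ x ∈ Ioo 0 R, 0 ≤ g (u x)) {K : ℝ} (hK : ∀ x ∈ Ioo 0 R, g (u x) ≤ K) :
    ∀ x ∈ Ioo 0 R, |y x| ^ (p - 1) ≤ K * x := by
  intro x hx
  have hm := monotoneOn_Icc_of_hasDerivAt_nonneg (b := 0) (c := R)
    (h.continuousOn_flux.add
      ((continuous_const.mul (continuous_pow (n + 1))).continuousOn (f := fun t => K * t ^ (n + 1))))
    (fun t ht => (h.hasDerivAt_flux t ⟨ht.1, ht.2.le⟩).add
      ((hasDerivAt_pow (n + 1) t).const_mul K)) (fun t ht => by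
      have h1 := pow_nonneg ht.1.le n
      have h2 := mul_nonneg h1 (sub_nonneg.mpr (hK t ht))
      have h3 : 0 ≤ K := (hg t ht).trans (hK t ht)
      have h4 := mul_nonneg (mul_nonneg h3 h1) (Nat.cast_nonneg (α := ℝ) n)
      simp only [Nat.add_sub_cancel]
      push_cast
      nlinarith)
  have h1 := hm ⟨le_rfl, hx.1.le.trans hx.2.le⟩ ⟨hx.1.le, hx.2.le⟩ hx.1.le
  simp only [Pi.add_apply, h.flux_zero] at h1
  have h2 := pow_pos hx.1 n
  have h3 : phip p (y x) ≤ 0 := phip_nonpos_iff.mpr (h.deriv_nonpos hg x hx)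
  rw [← abs_phip hp, abs_of_nonpos h3]
  have h4 : 0 ≤ x ^ n * (phip p (y x) + K * x) := by
    have : (0 : ℝ) ^ (n + 1) = 0 := by simp
    rw [this] at h1
    calc (0 : ℝ) ≤ _ := by simpa using h1
      _ = _ := by ring
  linarith [nonneg_of_mul_nonneg_right h4 h2]

lemma rpow_drop_le (hp : 1 < p) (h : IsRadialSol p n g u y R) (hR : 0 < R)
    (hg : ∀ x ∈ Ioo 0 R, 0 ≤ g (u x)) {K : ℝ} (hK : ∀ x ∈ Ioo 0 R, g (u x) ≤ K) :
    (u 0 - u R) ^ (p - 1) ≤ K * R ^ p := by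
  obtain ⟨ξ, hξ, he⟩ := exists_hasDerivAt_eq_slope u y hR h.continuousOn
    (fun x hx => h.hasDerivAt x ⟨hx.1.le, hx.2.le⟩)
  have h1 : u 0 - u R = |y ξ| * R := by
    rw [abs_of_nonpos (h.deriv_nonpos hg ξ hξ), he, sub_zero, neg_mul, div_mul_cancel₀ _ hR.ne',
      neg_sub]
  have hK0 : 0 ≤ K := (hg ξ hξ).trans (hK ξ hξ)
  rw [h1, Real.mul_rpow (abs_nonneg _) hR.le]
  calc |y ξ| ^ (p - 1) * R ^ (p - 1) ≤ (K * R) * R ^ (p - 1) := by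
        gcongr
        exact (h.abs_deriv_rpow_le hp hg hK ξ hξ).trans (by gcongr; exact hξ.2.le)
    _ = K * R ^ p := by
        have : R ^ p = R ^ (p - 1) * R := by rw [← Real.rpow_add_one hR.ne']; ring_nf
        rw [this]; ring

/-- A lower bound for the Pohozaev integrand gives a lower bound for the growth of the
Pohozaev functional. -/
lemma pohozaev_add_le (hp : 1 < p) (h : IsRadialSol p n g u y R) {F : ℝ → ℝ} {a C r : ℝ}
    (hF : ∀ s, HasDerivAt F (g s) s) (ha : 0 ≤ 1 - (n + 1) / p + a) (hr : 0 ≤ r) (hrR : r ≤ R)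
    (hC : ∀ x ∈ Ioo r R, C ≤ (n + 1) * F (u x) - a * (u x * g (u x))) :
    pohozaev p a n F u y r + C / (n + 1) * (R ^ (n + 1) - r ^ (n + 1)) ≤
      pohozaev p a n F u y R := by
  have hFc : Continuous F := continuous_iff_continuousAt.mpr fun s => (hF s).continuousAt
  have hsub : Icc r R ⊆ Icc 0 R := Icc_subset_Icc_left hr
  have hm := monotoneOn_Icc_of_hasDerivAt_nonneg (b := r) (c := R)
    ((continuousOn_pohozaev hp a hFc (h.continuousOn.mono hsub) (h.continuousOn_deriv.mono hsub)
      (h.continuousOn_flux.mono hsub)).sub ((continuous_const.mul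
        (continuous_pow (n + 1))).continuousOn (f := fun t => C / (n + 1) * t ^ (n + 1))))
    (fun t ht => (hasDerivAt_pohozaev hp a (hr.trans_lt ht.1)
      (h.hasDerivAt t ⟨hr.trans ht.1.le, ht.2.le⟩) (hF (u t))
      (h.hasDerivAt_flux t ⟨hr.trans_lt ht.1, ht.2.le⟩)).sub
      ((hasDerivAt_pow (n + 1) t).const_mul (C / (n + 1)))) (fun t ht => by
      have h1 := pow_nonneg (hr.trans ht.1.le) n
      have h2 : C / (n + 1) * (((n + 1 : ℕ) : ℝ) * t ^ (n + 1 - 1)) = t ^ n * C := by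
        push_cast
        field_simp
      rw [h2, ← mul_sub]
      have h3 := mul_nonneg ha (Real.rpow_nonneg (abs_nonneg (y t)) p)
      have h4 := hC t ht
      exact mul_nonneg h1 (by linarith))
  have h1 := hm ⟨le_rfl, hrR⟩ ⟨hrR, le_rfl⟩ hrR
  simp only [Pi.sub_apply] at h1
  linarith

end IsRadialSol

lemma pohozaev_le {p : ℝ} (hp : 1 < p) {n : ℕ} {F u y : ℝ → ℝ} {a x R M B : ℝ} (ha : 0 ≤ a)
    (hx : 0 ≤ x) (hxR : x ≤ R) (hu : 0 ≤ u x) (huM : u x ≤ M) (hy : |y x| ≤ M)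
    (hF : F (u x) ≤ B) (hB : 0 ≤ B) :
    pohozaev p a n F u y x ≤ R ^ (n + 1) * (M ^ p + B) + a * (R ^ n * M ^ (p - 1) * M) := by
  have hR : 0 ≤ R := hx.trans hxR
  have hM : 0 ≤ M := hu.trans huM
  have h0 : phip p (y x) ≤ M ^ (p - 1) := (le_abs_self _).trans (by
    rw [abs_phip hp]
    exact Real.rpow_le_rpow (abs_nonneg _) hy (by linarith))
  have h1 : |y x| ^ p ≤ M ^ p := Real.rpow_le_rpow (abs_nonneg _) hy (by linarith)
  have h2 : (p - 1) / p * |y x| ^ p ≤ M ^ p := by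
    have : (p - 1) / p ≤ 1 := by rw [div_le_one (by linarith)]; linarith
    exact (mul_le_of_le_one_left (Real.rpow_nonneg (abs_nonneg _) _) this).trans h1
  have h3 : 0 ≤ M ^ p + B := by positivity
  have h4 : 0 ≤ M ^ (p - 1) := by positivity
  unfold pohozaev
  have h5 : x ^ (n + 1) * ((p - 1) / p * |y x| ^ p + F (u x)) ≤ R ^ (n + 1) * (M ^ p + B) :=
    (mul_le_mul_of_nonneg_left (add_le_add h2 hF) (by positivity)).trans
      (mul_le_mul_of_nonneg_right (by gcongr) h3)
  have h6 : x ^ n * phip p (y x) * u x ≤ R ^ n * M ^ (p - 1) * M :=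
    calc x ^ n * phip p (y x) * u x ≤ x ^ n * M ^ (p - 1) * u x := by gcongr
      _ ≤ _ := by gcongr
  exact add_le_add h5 (mul_le_mul_of_nonneg_left h6 ha)

lemma subcritical_lower_bound {p a L κ A R r d K Φ : ℝ} {n : ℕ} (ha : 0 ≤ a)
    (han : n + 1 ≤ p * (1 + a)) (hL : 0 < L) (hκ : 0 < κ) (hA : 0 < A)
    (hr : 0 < r) (hrR : r ≤ R) (hd : 1 ≤ d) (hK : 0 < K)
    (h1 : κ * d ^ (p - 1) ≤ K * r ^ p) (h2 : K ≤ A * d ^ (L - 1)) (h3 : K * d ≤ L * Φ) :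
    R ^ (n + 1) / R ^ (p * (1 + a)) * κ ^ (1 + a) * A ^ (-a) / L * d ^ (n + 1 - a * L) ≤
      Φ * r ^ (n + 1) := by
  have hR : 0 < R := hr.trans_le hrR
  have hd0 : 0 < d := by linarith
  have e1 : κ ^ (1 + a) * d ^ ((p - 1) * (1 + a)) ≤ K ^ (1 + a) * r ^ (p * (1 + a)) := by
    have := Real.rpow_le_rpow (by positivity) h1 (by linarith : 0 ≤ 1 + a)
    rwa [Real.mul_rpow hκ.le (by positivity), Real.mul_rpow hK.le (by positivity),
      ← Real.rpow_mul hd0.le, ← Real.rpow_mul hr.le] at this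
  have e2 : r ^ (p * (1 + a)) / R ^ (p * (1 + a)) ≤ r ^ (n + 1) / R ^ (n + 1) := by
    rw [← Real.div_rpow hr.le hR.le, ← div_pow, ← Real.rpow_natCast]
    exact Real.rpow_le_rpow_of_exponent_ge (by positivity) ((div_le_one hR).mpr hrR)
      (by push_cast; exact han)
  have e3 : A ^ (-a) * d ^ (-a * (L - 1)) ≤ K ^ (-a) := by
    have := Real.rpow_le_rpow_of_nonpos hK h2 (by linarith : -a ≤ 0)
    rwa [Real.mul_rpow hA.le (by positivity), ← Real.rpow_mul hd0.le, mul_comm (L - 1)] at this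
  have e4 : d ^ (n + 1 - a * L) ≤ d ^ ((p - 1) * (1 + a)) * d ^ (-a * (L - 1)) * d := by
    rw [← Real.rpow_add hd0, ← Real.rpow_add_one hd0.ne']
    exact Real.rpow_le_rpow_of_exponent_le hd (by nlinarith)
  have e5 : K ^ (-a) * K ^ (1 + a) = K := by
    rw [← Real.rpow_add hK]; simp
  have e6 : R ^ (n + 1) / R ^ (p * (1 + a)) * r ^ (p * (1 + a)) ≤ r ^ (n + 1) := by
    have := mul_le_mul_of_nonneg_left e2 (by positivity : 0 ≤ R ^ (n + 1))
    calc _ = R ^ (n + 1) * (r ^ (p * (1 + a)) / R ^ (p * (1 + a))) := by ring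
      _ ≤ _ := this
      _ = _ := by field_simp
  calc R ^ (n + 1) / R ^ (p * (1 + a)) * κ ^ (1 + a) * A ^ (-a) / L * d ^ (n + 1 - a * L)
      ≤ R ^ (n + 1) / R ^ (p * (1 + a)) * κ ^ (1 + a) * A ^ (-a) / L *
          (d ^ ((p - 1) * (1 + a)) * d ^ (-a * (L - 1)) * d) := by gcongr
    _ = R ^ (n + 1) / R ^ (p * (1 + a)) * (κ ^ (1 + a) * d ^ ((p - 1) * (1 + a))) *
          (A ^ (-a) * d ^ (-a * (L - 1))) * d / L := by ring
    _ ≤ R ^ (n + 1) / R ^ (p * (1 + a)) * (K ^ (1 + a) * r ^ (p * (1 + a))) * K ^ (-a) * d / L := by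
        gcongr
    _ = (R ^ (n + 1) / R ^ (p * (1 + a)) * r ^ (p * (1 + a))) *
          ((K ^ (-a) * K ^ (1 + a)) * d / L) := by ring
    _ ≤ r ^ (n + 1) * (K * d / L) := by rw [e5]; gcongr
    _ ≤ r ^ (n + 1) * Φ := by
        gcongr
        rw [div_le_iff₀ hL]; linarith
    _ = Φ * r ^ (n + 1) := mul_comm _ _

lemma exists_pohozaev_integrand_bound {a L η s₀ m : ℝ} {g F : ℝ → ℝ} (hg : Continuous g)
    (hFc : Continuous F) (hF0 : ∀ s, 0 ≤ F s) (hFm : MonotoneOn F (Ici 1)) (ha : 0 ≤ a) (hm : 0 ≤ m)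
    (haL : a * L ≤ m) (hη : 0 < η) (hη1 : η < 1) (hs₀ : 1 ≤ η * s₀)
    (hL : ∀ s, s₀ ≤ s → g s * s ≤ L * F (η * s)) :
    ∃ C, 0 ≤ C ∧ ∀ s, 0 ≤ s → -C ≤ m * F s - a * (s * g s) := by
  obtain ⟨C, hC⟩ := (isCompact_Icc (a := 0) (b := s₀)).exists_bound_of_continuousOn
    (f := fun s => m * F s - a * (s * g s)) (by fun_prop)
  refine ⟨|C|, abs_nonneg C, fun s hs => ?_⟩
  rcases le_total s s₀ with h | h
  · have := (abs_le.mp ((Real.norm_eq_abs _) ▸ hC s ⟨hs, h⟩)).1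
    linarith [le_abs_self C]
  · have h1 : η * s ≤ s := by nlinarith
    have h2 : 1 ≤ η * s := hs₀.trans (by gcongr)
    have h3 : F (η * s) ≤ F s := hFm h2 (h2.trans h1) h1
    have h4 : a * (g s * s) ≤ a * (L * F (η * s)) := mul_le_mul_of_nonneg_left (hL s h) ha
    have h5 : a * L * F (η * s) ≤ m * F (η * s) := by gcongr; exact hF0 _
    have h6 : m * F (η * s) ≤ m * F s := by gcongr
    linarith [abs_nonneg C]

theorem exists_forall_le_add_abs_deriv {p a L η s₀ R₂ M : ℝ} {n : ℕ} {g F K : ℝ → ℝ} (hp : 1 < p)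
    (hR₂ : 0 < R₂) (hg : Continuous g) (hF : ∀ s, HasDerivAt F (g s) s) (hF0 : ∀ s, 0 ≤ F s)
    (hg1 : ∀ s, 1 < s → 0 < g s) (ha : 0 ≤ a) (han : n + 1 ≤ p * (1 + a)) (hL : 0 < L)
    (haL : a * L < n + 1) (hη : 0 < η) (hη1 : η < 1) (hs₀ : 1 ≤ η * s₀)
    (hgK : ∀ s, s₀ ≤ s → ∀ σ, σ ≤ s → g σ ≤ K s)
    (hKF : ∀ s, s₀ ≤ s → K s * s ≤ L * F (η * s)) :
    ∃ D, 0 < D ∧ ∀ u y : ℝ → ℝ, ∀ x ∈ Icc 0 R₂, D ≤ u 0 → IsRadialSol p n g u y x →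
      (∀ t ∈ Icc 0 x, 0 ≤ u t) → M ≤ u x + |y x| := by
  have hFc : Continuous F := continuous_iff_continuousAt.mpr fun s => (hF s).continuousAt
  have hFm : MonotoneOn F (Ici 1) := by
    refine monotoneOn_of_hasDerivWithinAt_nonneg (convex_Ici 1) hFc.continuousOn
      (fun s _ => (hF s).hasDerivWithinAt) fun s hs => ?_
    rw [interior_Ici] at hs
    exact (hg1 s hs).le
  have hs₀1 : 1 < s₀ := by nlinarith
  have hs₀0 : 0 < s₀ := by linarith
  have hgF : ∀ s, s₀ ≤ s → g s * s ≤ L * F (η * s) := fun s hs =>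
    (mul_le_mul_of_nonneg_right (hgK s hs s le_rfl) (hs₀0.le.trans hs)).trans (hKF s hs)
  have hFη : ∀ s, s₀ ≤ s → F (η * s) ≤ F s := fun s hs => by
    have h1 : 1 ≤ η * s := hs₀.trans (by gcongr)
    have h2 : η * s ≤ s := by nlinarith
    exact hFm h1 (h1.trans h2) h2
  have hK0 : ∀ s, s₀ ≤ s → 0 < K s := fun s hs =>
    (hg1 s (hs₀1.trans_le hs)).trans_le (hgK s hs s le_rfl)
  have hm0 : (0 : ℝ) < n + 1 := by positivity
  obtain ⟨C, hC0, hC⟩ := exists_pohozaev_integrand_bound hg hFc hF0 hFm ha hm0.le haL.le hη hη1 hs₀ hgF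
  obtain ⟨B', hB'⟩ := (isCompact_Icc (a := 0) (b := M)).exists_bound_of_continuousOn
    (f := F) hFc.continuousOn
  obtain ⟨B, hB0, hB⟩ : ∃ B, 0 ≤ B ∧ ∀ s ∈ Icc 0 M, F s ≤ B := ⟨|B'|, abs_nonneg _, fun s hs =>
    (Real.le_norm_self _).trans ((hB' s hs).trans (le_abs_self _))⟩
  have hFs₀ : 0 < F s₀ := by
    have h1 : 0 < L * F (η * s₀) := (mul_pos (hK0 s₀ le_rfl) hs₀0).trans_le (hKF s₀ le_rfl)
    exact (pos_of_mul_pos_right h1 hL.le).trans_le (hFη s₀ le_rfl)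
  obtain ⟨A, hA0, hA⟩ : ∃ A, 0 < A ∧ ∀ s, s₀ ≤ s → K s ≤ A * s ^ (L - 1) := by
    refine ⟨L * (F s₀ * s₀ ^ (-L)), by positivity, fun s hs => ?_⟩
    have hs0 : 0 < s := hs₀0.trans_le hs
    have h1 := le_mul_rpow_of_mul_deriv_le hs₀0 hF (fun t ht => (hgF t ht).trans
      (mul_le_mul_of_nonneg_left (hFη t ht) hL.le)) hs
    have h2 : K s * s ≤ L * (F s₀ * s₀ ^ (-L) * s ^ L) := (hKF s hs).trans
      (mul_le_mul_of_nonneg_left ((hFη s hs).trans h1) hL.le)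
    have h3 : s ^ L = s ^ (L - 1) * s := by rw [← Real.rpow_add_one hs0.ne']; ring_nf
    rw [h3] at h2
    exact le_of_mul_le_mul_right (by linarith) hs0
  have hκ : 0 < (1 - η) ^ (p - 1) := Real.rpow_pos_of_pos (by linarith) _
  set c₁ := R₂ ^ (n + 1) / R₂ ^ (p * (1 + a)) * ((1 - η) ^ (p - 1)) ^ (1 + a) * A ^ (-a) / L
  have hc₁0 : 0 < c₁ := by positivity
  set c₂ := (n + 1 - a * L) / (n + 1) with hc₂
  have hc₂0 : 0 < c₂ := div_pos (by linarith) hm0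
  set T := R₂ ^ (n + 1) * (M ^ p + B) + a * (R₂ ^ n * M ^ (p - 1) * M) +
    C / (n + 1) * R₂ ^ (n + 1)
  have hlim : Tendsto (fun d : ℝ => c₂ * c₁ * d ^ (n + 1 - a * L)) atTop atTop :=
    (tendsto_rpow_atTop (by linarith)).const_mul_atTop (by positivity)
  obtain ⟨D, hD⟩ := eventually_atTop.mp ((hlim.eventually_gt_atTop T).and
    ((eventually_ge_atTop s₀).and (eventually_ge_atTop (M / η))))
  refine ⟨max D 1, by positivity, fun u y x hx hd h hu => ?_⟩
  obtain ⟨hd1, hd2, hd3⟩ := hD (u 0) ((le_max_left _ _).trans hd)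
  rw [div_le_iff₀' hη] at hd3
  by_contra! hlt
  have hux : u x < M := by linarith [abs_nonneg (y x)]
  have hyx : |y x| < M := by linarith [hu x ⟨hx.1, le_rfl⟩]
  have hu0 : 0 < u 0 := by linarith
  obtain ⟨r, ⟨hrx, hrη⟩, hrmin⟩ : ∃ r, IsLeast (Icc 0 x ∩ u ⁻¹' Iic (η * u 0)) r :=
    (isCompact_Icc.of_isClosed_subset (h.continuousOn.preimage_isClosed_of_isClosed isClosed_Icc
      isClosed_Iic) inter_subset_left).exists_isLeast
      ⟨x, ⟨hx.1, le_rfl⟩, (hux.le.trans hd3 : u x ≤ η * u 0)⟩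
  have hrη : u r ≤ η * u 0 := hrη
  have hr0 : 0 < r := by
    refine hrx.1.lt_of_ne fun h0 => ?_
    rw [← h0] at hrη
    nlinarith
  have habove : ∀ t ∈ Ioo 0 r, η * u 0 < u t := fun t ht => by
    by_contra! h'
    exact absurd (hrmin ⟨⟨ht.1.le, ht.2.le.trans hrx.2⟩, h'⟩) (not_le.mpr ht.2)
  have h1η : 1 ≤ η * u 0 := hs₀.trans (by gcongr)
  have hr := h.mono hrx.2
  have hgn : ∀ t ∈ Ioo 0 r, 0 ≤ g (u t) := fun t ht =>
    (hg1 _ (h1η.trans_lt (habove t ht))).le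
  have hud : ∀ t ∈ Ioo 0 r, u t ≤ u 0 := fun t ht => hr.le_initial hgn t ⟨ht.1.le, ht.2.le⟩
  have hgk : ∀ t ∈ Ioo 0 r, g (u t) ≤ K (u 0) := fun t ht => hgK _ hd2 _ (hud t ht)
  have hdrop : (1 - η) ^ (p - 1) * u 0 ^ (p - 1) ≤ K (u 0) * r ^ p := by
    refine le_trans ?_ (hr.rpow_drop_le hp hr0 hgn hgk)
    rw [← Real.mul_rpow (by linarith) hu0.le]
    exact Real.rpow_le_rpow (mul_nonneg (by linarith) hu0.le) (by linarith) (by linarith)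
  have hlow := subcritical_lower_bound (n := n) ha han hL hκ hA0 hr0 (hrx.2.trans hx.2)
    (by linarith) (hK0 _ hd2) hdrop (hA _ hd2) (hKF _ hd2)
  have ha' : 0 ≤ 1 - ((n : ℝ) + 1) / p + a := by
    have : ((n : ℝ) + 1) / p ≤ 1 + a := by rw [div_le_iff₀' (by linarith)]; exact han
    linarith
  have hP1 := hr.pohozaev_add_le hp (a := a) (C := (n + 1 - a * L) * F (η * u 0)) hF ha' le_rfl
    hr0.le (fun t ht => by
      have h1 : u t * g (u t) ≤ u 0 * K (u 0) := by
        gcongr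
        · exact hgn t ht
        · exact hud t ht
        · exact hgk t ht
      have h2 : F (η * u 0) ≤ F (u t) :=
        hFm h1η (h1η.trans (habove t ht).le) (habove t ht).le
      have h3 : a * (u t * g (u t)) ≤ a * (L * F (η * u 0)) :=
        mul_le_mul_of_nonneg_left (by linarith [hKF _ hd2]) ha
      have h4 : ((n : ℝ) + 1) * F (η * u 0) ≤ (n + 1) * F (u t) := by gcongr
      linarith)
  have hP2 := h.pohozaev_add_le hp (a := a) (C := -C) hF ha' hr0.le hrx.2
    (fun t ht => hC _ (hu t ⟨hr0.le.trans ht.1.le, ht.2.le⟩))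
  have hP3 := pohozaev_le (n := n) (F := F) (u := u) (y := y) hp ha hx.1 hx.2
    (hu x ⟨hx.1, le_rfl⟩) hux.le hyx.le (hB _ ⟨hu x ⟨hx.1, le_rfl⟩, hux.le⟩) hB0
  rw [pohozaev_zero a h.deriv_zero, zero_add, zero_pow (by simp), sub_zero] at hP1
  have h5 : C / (n + 1) * (x ^ (n + 1) - r ^ (n + 1)) ≤ C / (n + 1) * R₂ ^ (n + 1) := by
    have h6 : x ^ (n + 1) ≤ R₂ ^ (n + 1) := pow_le_pow_left₀ hx.1 hx.2 _
    have h7 : 0 ≤ r ^ (n + 1) := by positivity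
    exact mul_le_mul_of_nonneg_left (by linarith) (by positivity)
  have h8 : c₂ * c₁ * u 0 ^ (n + 1 - a * L) ≤ c₂ * (F (η * u 0) * r ^ (n + 1)) := by
    rw [mul_assoc]
    exact mul_le_mul_of_nonneg_left hlow hc₂0.le
  have h9 : (n + 1 - a * L) * F (η * u 0) / (n + 1) * r ^ (n + 1) =
      c₂ * (F (η * u 0) * r ^ (n + 1)) := by rw [hc₂]; ring
  have h10 : -C / (n + 1) * (x ^ (n + 1) - r ^ (n + 1)) =
    -(C / (n + 1) * (x ^ (n + 1) - r ^ (n + 1))) := by ring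
  rw [h9] at hP1
  rw [h10] at hP2
  linarith

section Truncation

variable {f : ℝ → ℝ}

lemma fhat_eq_comp_max (h0 : f 0 = 0) : fhat f = fun s => f (max s 0) := by
  funext s
  unfold fhat
  split_ifs with h
  · rw [max_eq_left h]
  · rw [max_eq_right (not_le.mp h).le, h0]

lemma continuous_fhat (hf : ContinuousOn f (Ici 0)) (heq : Feq f) : Continuous (fhat f) := by
  rw [fhat_eq_comp_max heq.1]
  exact hf.comp_continuous (by fun_prop) fun s => le_max_right s 0

lemma fhat_pos (heq : Feq f) {s : ℝ} (hs : 1 < s) : 0 < fhat f s := by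
  rw [fhat, if_pos (by linarith)]
  exact heq.2.2.2 s hs

lemma fhat_nonpos (heq : Feq f) {s : ℝ} (hs : s ≤ 1) : fhat f s ≤ 0 := by
  unfold fhat
  split_ifs with h
  · rcases h.eq_or_lt with rfl | h'
    · exact heq.1.le
    rcases hs.eq_or_lt with rfl | hs'
    · exact heq.2.1.le
    exact (heq.2.2.1 s h' hs').le
  · exact le_rfl

lemma hasDerivAt_Fhat (hf : ContinuousOn f (Ici 0)) (heq : Feq f) (s : ℝ) :
    HasDerivAt (Fhat f) (fhat f s) s :=
  (continuous_fhat hf heq).integral_hasStrictDerivAt 1 s |>.hasDerivAt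

lemma Fhat_nonneg (heq : Feq f) {s : ℝ} : 0 ≤ Fhat f s := by
  unfold Fhat
  rcases le_total 1 s with h | h
  · refine intervalIntegral.integral_nonneg h fun t ht => ?_
    rcases ht.1.eq_or_lt with rfl | ht'
    · simp [fhat, heq.2.1]
    · exact (fhat_pos heq ht').le
  · rw [intervalIntegral.integral_symm, ← intervalIntegral.integral_neg]
    exact intervalIntegral.integral_nonneg h fun t ht =>
      neg_nonneg.mpr (fhat_nonpos heq ht.2)

lemma Fhat_pos (hf : ContinuousOn f (Ici 0)) (heq : Feq f) {s : ℝ} (hs : 1 < s) :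
    0 < Fhat f s :=
  intervalIntegral.intervalIntegral_pos_of_pos_on
    ((continuous_fhat hf heq).intervalIntegrable 1 s) (fun _ ht => fhat_pos heq ht.1) hs

lemma Fhat_eq_Fint {s : ℝ} (hs : 0 ≤ s) : Fhat f s = Fint f s := by
  refine intervalIntegral.integral_congr fun t ht => ?_
  exact if_pos ((le_min zero_le_one hs).trans ht.1)

lemma fhat_le_fstar (hf : ContinuousOn f (Ici 0)) (heq : Feq f) {s σ : ℝ} (hs : 1 ≤ s)
    (hσ : σ ≤ s) : fhat f σ ≤ fstar f s := by
  have hb : BddAbove (f '' Icc 1 s) := (isCompact_Icc.image_of_continuousOn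
    (hf.mono fun t ht => zero_le_one.trans ht.1)).bddAbove
  rcases le_total 1 σ with h | h
  · rw [fhat, if_pos (by linarith)]
    exact le_csSup hb ⟨σ, ⟨h, hσ⟩, rfl⟩
  · exact (fhat_nonpos heq h).trans (le_csSup hb ⟨1, ⟨le_rfl, hs⟩, heq.2.1⟩)

end Truncation

lemma exists_pohozaev_exponent {p L : ℝ} {N : ℕ} (hp : 0 < p) (hL : (L : EReal) < pstar p (N + 1)) :
    ∃ a : ℝ, 0 ≤ a ∧ ((N + 1 : ℕ) : ℝ) ≤ p * (1 + a) ∧ a * L < ((N + 1 : ℕ) : ℝ) := by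
  unfold pstar at hL
  split_ifs at hL with h
  · have hsub : 0 < ((N + 1 : ℕ) : ℝ) - p := sub_pos.mpr h
    refine ⟨(((N + 1 : ℕ) : ℝ) - p) / p, by positivity, le_of_eq (by field_simp; ring), ?_⟩
    rw [EReal.coe_lt_coe_iff, lt_div_iff₀ hsub] at hL
    rw [div_mul_eq_mul_div, div_lt_iff₀ hp]
    linarith
  · refine ⟨0, le_rfl, by linarith, ?_⟩
    rw [zero_mul]
    positivity

lemma CauchySol.isRadialSol {p R d : ℝ} {n : ℕ} {g u : ℝ → ℝ}
    (h : CauchySol p (n + 1) 0 R g u d) : IsRadialSol p n g u (deriv u) R where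
  hasDerivAt x hx := (h.1 x hx).hasDerivAt
  deriv_zero := h.2.2.2.1
  continuousOn_deriv := h.2.1
  continuousOn_flux := h.2.2.2.2.1
  hasDerivAt_flux := h.2.2.2.2.2

lemma nonneg_of_le_rOne {R₁ R₂ t : ℝ} {u : ℝ → ℝ}
    (hu : ContinuousOn u (Icc R₁ (rOne R₁ R₂ u))) (hR : R₁ ≤ R₂) (h0 : 0 ≤ u R₁)
    (ht : t ∈ Icc R₁ (rOne R₁ R₂ u)) : 0 ≤ u t := by
  rcases (ht.1.trans ht.2).eq_or_lt with h | h
  · rwa [le_antisymm (ht.2.trans_eq h.symm) ht.1]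
  have hIco : ∀ s ∈ Ico R₁ (rOne R₁ R₂ u), 0 ≤ u s := fun s hs => by
    have hne : {x | x ∈ Icc R₁ R₂ ∧ ∀ s ∈ Ico R₁ x, 0 < u s}.Nonempty :=
      ⟨R₁, ⟨le_rfl, hR⟩, fun s hs => absurd hs.2 (not_lt.mpr hs.1)⟩
    obtain ⟨x, hx, hsx⟩ := exists_lt_of_lt_csSup hne hs.2
    exact (hx.2 s ⟨hs.1, hsx⟩).le
  have hcl := closure_Ico h.ne
  exact le_on_closure hIco continuousOn_const (hcl ▸ hu) (hcl ▸ ht)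

theorem stmt18 (p : ℝ) (hp : 1 < p) (N : ℕ) (hN : 1 ≤ N)
    (R2 : ℝ) (hR2 : 0 < R2)
    (f : ℝ → ℝ) (hreg : Freg f) (heq : Feq f) (h0 : Fzero p f) (hsubc : Fsubc p N f) :
    ∀ M : ℝ, 0 < M → ∃ D : ℝ, 0 < D ∧ ∀ d : ℝ, D ≤ d →
      ∀ u : ℝ → ℝ, CauchySol p N 0 R2 (fhat f) u d →
        ∀ x ∈ Icc 0 (rOne 0 R2 u), M ≤ u x + |deriv u x| := by
  intro M _
  obtain ⟨n, rfl⟩ := Nat.exists_eq_add_of_le' hN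
  obtain ⟨η, -, hη, hη1, L, hLp, hev⟩ := hsubc
  obtain ⟨s₀, hs₀⟩ := eventually_atTop.mp (hev.and (eventually_ge_atTop (2 / η)))
  have hηs : ∀ s, s₀ ≤ s → 2 ≤ η * s := fun s hs => by
    have := (hs₀ s hs).2
    rwa [div_le_iff₀' hη] at this
  have hs1 : ∀ s, s₀ ≤ s → 1 ≤ s := fun s hs => by nlinarith [hηs s hs]
  have hgK : ∀ s, s₀ ≤ s → ∀ σ, σ ≤ s → fhat f σ ≤ fstar f s := fun s hs σ hσ =>
    fhat_le_fstar hreg.1 heq (hs1 s hs) hσ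
  have hKF : ∀ s, s₀ ≤ s → fstar f s * s ≤ L * Fhat f (η * s) := fun s hs => by
    have h1 := (hs₀ s hs).1
    have h2 := hηs s hs
    rwa [← Fhat_eq_Fint (by linarith), div_le_iff₀ (Fhat_pos hreg.1 heq (by linarith))] at h1
  have hL : 0 < L := by
    have h1 : 0 < fstar f s₀ := (fhat_pos heq (by nlinarith [hηs s₀ le_rfl])).trans_le
      (hgK s₀ le_rfl s₀ le_rfl)
    have h2 : 0 < fstar f s₀ * s₀ := mul_pos h1 (by linarith [hs1 s₀ le_rfl])
    have h3 := Fhat_pos hreg.1 heq (by linarith [hηs s₀ le_rfl] : 1 < η * s₀)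
    exact pos_of_mul_pos_left (h2.trans_le (hKF s₀ le_rfl)) h3.le
  obtain ⟨a, ha, han, haL⟩ := exists_pohozaev_exponent (by linarith : 0 < p) hLp
  push_cast at han haL
  obtain ⟨D, hD0, hD⟩ := exists_forall_le_add_abs_deriv (M := M) hp hR2 (continuous_fhat hreg.1 heq)
    (hasDerivAt_Fhat hreg.1 heq) (fun s => Fhat_nonneg heq) (fun s => fhat_pos heq) ha han hL haL
    hη hη1 (by linarith [hηs s₀ le_rfl]) hgK hKF
  refine ⟨D, hD0, fun d hd u hu x hx => ?_⟩
  have hle : rOne 0 R2 u ≤ R2 := Real.sSup_le (fun x hx => hx.1.2) hR2.le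
  have hxR : x ∈ Icc 0 R2 := ⟨hx.1, hx.2.trans hle⟩
  have hsol := hu.isRadialSol
  have hu0 : u 0 = d := hu.2.2.1
  refine hD u (deriv u) x hxR (hd.trans_eq hu0.symm) (hsol.mono hxR.2) fun t ht => ?_
  exact nonneg_of_le_rOne (hsol.continuousOn.mono (Icc_subset_Icc_right hle))
    hR2.le (by linarith) ⟨ht.1, ht.2.trans hx.2⟩
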